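/- For every ε > 0 there is a constant C > 0 such that for all integers N ≥ 1, q ≥ 1, a with gcd(a,q) = 1 and all real R ≥ 2, one has |Σ_{n ≤ N, n ≡ a (mod q)} λ_R(n)² − (N/φ(q))·(log R + c)| ≤ C·( (N/φ(q))·v(q) + (N/φ(q))·R^{−1/2+ε} + R² ). -/

import Mathlib

open Finset ArithmeticFunction

/-- The Generalized Riemann Hypothesis for Dirichlet L-functions: every zero of a
Dirichlet L-function in the critical strip lies on the critical line. -/
def GRH : Prop :=
  ∀ (N : ℕ) [NeZero N] (χ : DirichletCharacter ℂ N) (s : ℂ),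
    DirichletCharacter.LFunction χ s = 0 → 0 < s.re → s.re < 1 → s.re = 1 / 2

/-- `ψ(x; q, a) = ∑_{n ≤ x, n ≡ a (mod q)} Λ(n)`. -/
noncomputable def psi (x : ℝ) (q a : ℕ) : ℝ :=
  ∑ n ∈ (Finset.Icc 1 ⌊x⌋₊).filter (fun n : ℕ => (n : ZMod q) = (a : ZMod q)),
    ArithmeticFunction.vonMangoldt n

/-- `I(x,h,q,a) = ∫_x^{2x} (ψ(y+h;q,a) − ψ(y;q,a) − h/φ(q))² dy`. -/
noncomputable def momentI (x h : ℝ) (q a : ℕ) : ℝ :=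
  ∫ y in x..(2 * x), (psi (y + h) q a - psi y q a - h / (q.totient : ℝ)) ^ 2

/-- `λ_R(n) = ∑_{r ≤ R} (μ²(r)/φ(r)) ∑_{d ∣ (r,n)} d·μ(d)`. -/
noncomputable def lamR (R : ℝ) (n : ℕ) : ℝ :=
  ∑ r ∈ Finset.Icc 1 ⌊R⌋₊,
    ((ArithmeticFunction.moebius r : ℝ) ^ 2 / (r.totient : ℝ)) *
      ∑ d ∈ (Nat.gcd r n).divisors, (d : ℝ) * (ArithmeticFunction.moebius d : ℝ)

/-- `c = γ + ∑_p (log p)/(p(p−1))`. -/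
noncomputable def cGY : ℝ :=
  Real.eulerMascheroniConstant +
    ∑' p : Nat.Primes, Real.log (p : ℕ) / (((p : ℕ) : ℝ) * (((p : ℕ) : ℝ) - 1))

/-- `v(k) = ∑_{p ∣ k} (log p)/p`. -/
noncomputable def vGY (k : ℕ) : ℝ := ∑ p ∈ k.primeFactors, Real.log p / (p : ℝ)

/-- `w(k) = ∏_{p ∣ k} (1 + 1/√p)`. -/
noncomputable def wGY (k : ℕ) : ℝ := ∏ p ∈ k.primeFactors, (1 + 1 / Real.sqrt p)

/-- `g(k) = ∏_{p ∣ k} (1 + p/(p−1))`. -/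
noncomputable def gGY (k : ℕ) : ℝ := ∏ p ∈ k.primeFactors, (1 + (p : ℝ) / ((p : ℝ) - 1))

/-- The twin prime constant `C = ∏_{p > 2} (1 − 1/(p−1)²)`. -/
noncomputable def twinC : ℝ :=
  ∏' p : Nat.Primes, (if 2 < (p : ℕ) then 1 - 1 / (((p : ℕ) : ℝ) - 1) ^ 2 else 1)

/-- The singular series `𝔖(k)`. -/
noncomputable def singSeries (k : ℕ) : ℝ :=
  if 2 ∣ k ∧ k ≠ 0 then
    2 * twinC * ∏ p ∈ k.primeFactors.filter (fun p => 2 < p), ((p : ℝ) - 1) / ((p : ℝ) - 2)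
  else 0

/-- `f(n,x,h)`, the length of the interval `[x,2x] ∩ [n−h,n)`. -/
noncomputable def flen (n : ℕ) (x h : ℝ) : ℝ :=
  if x ≤ n ∧ (n : ℝ) < x + h then (n : ℝ) - x
  else if x + h ≤ n ∧ (n : ℝ) ≤ 2 * x then h
  else if 2 * x < n ∧ (n : ℝ) ≤ 2 * x + h then 2 * x - n + h
  else 0


/-- `u(n) = n μ²(n)/φ(n)`. -/
noncomputable def uGY : ArithmeticFunction ℝ :=
  ⟨fun n => (n : ℝ) * ((ArithmeticFunction.moebius n : ℝ) ^ 2 / (n.totient : ℝ)), by simp⟩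

/-- `h = μ * u`. -/
noncomputable def hGY : ArithmeticFunction ℝ :=
  ((ArithmeticFunction.moebius : ArithmeticFunction ℤ) : ArithmeticFunction ℝ) * uGY

lemma uGY_apply (n : ℕ) :
    uGY n = (n : ℝ) * ((ArithmeticFunction.moebius n : ℝ) ^ 2 / (n.totient : ℝ)) := rfl

lemma uGY_mult : uGY.IsMultiplicative := by
  refine ⟨by simp [uGY_apply], ?_⟩
  intro m n hmn
  simp only [uGY_apply]
  rw [ArithmeticFunction.isMultiplicative_moebius.map_mul_of_coprime hmn, Nat.totient_mul hmn]
  push_cast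
  rw [mul_pow, mul_div_mul_comm]
  ring

lemma hGY_mult : hGY.IsMultiplicative :=
  ArithmeticFunction.isMultiplicative_moebius.intCast.mul uGY_mult

lemma hGY_sum (n : ℕ) : ∑ d ∈ n.divisors, hGY d = uGY n := by
  have : hGY * ((ArithmeticFunction.zeta : ArithmeticFunction ℕ) : ArithmeticFunction ℝ) = uGY := by
    rw [hGY, mul_right_comm, ArithmeticFunction.coe_moebius_mul_coe_zeta, one_mul]
  rw [← ArithmeticFunction.coe_mul_zeta_apply, this]

lemma hGY_pow_succ {p : ℕ} (hp : p.Prime) (k : ℕ) :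
    hGY (p ^ (k + 1)) = uGY (p ^ (k + 1)) - uGY (p ^ k) := by
  rw [← hGY_sum, ← hGY_sum, Nat.sum_divisors_prime_pow hp, Nat.sum_divisors_prime_pow hp,
    Finset.sum_range_succ _ (k + 1)]
  ring

lemma uGY_prime {p : ℕ} (hp : p.Prime) : uGY p = (p : ℝ) / ((p : ℝ) - 1) := by
  rw [uGY_apply, ArithmeticFunction.moebius_apply_prime hp, Nat.totient_prime hp,
    Nat.cast_sub hp.one_le]
  simp [div_eq_mul_inv]

lemma uGY_pow {p : ℕ} (hp : p.Prime) (k : ℕ) (hk : 2 ≤ k) : uGY (p ^ k) = 0 := by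
  rw [uGY_apply, ArithmeticFunction.moebius_apply_prime_pow hp (by omega)]
  simp [show k ≠ 1 by omega]

lemma hGY_prime {p : ℕ} (hp : p.Prime) : hGY p = 1 / ((p : ℝ) - 1) := by
  have h := hGY_pow_succ hp 0
  have h2 : (2 : ℝ) ≤ p := by exact_mod_cast hp.two_le
  have h3 : (p : ℝ) - 1 ≠ 0 := by linarith
  simp only [zero_add, pow_one, pow_zero, uGY_prime hp, uGY_mult.map_one] at h
  rw [h]; field_simp; ring

lemma hGY_prime_sq {p : ℕ} (hp : p.Prime) : hGY (p ^ 2) = - ((p : ℝ) / ((p : ℝ) - 1)) := by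
  have h := hGY_pow_succ hp 1
  simp only [one_add_one_eq_two, pow_one, uGY_prime hp, uGY_pow hp 2 le_rfl] at h
  rw [h]; ring

lemma hGY_prime_pow {p : ℕ} (hp : p.Prime) (k : ℕ) (hk : 3 ≤ k) : hGY (p ^ k) = 0 := by
  obtain ⟨j, rfl⟩ : ∃ j, k = j + 1 := ⟨k - 1, by omega⟩
  rw [hGY_pow_succ hp, uGY_pow hp _ (by omega), uGY_pow hp _ (by omega), sub_zero]

lemma tsum_pow_three (F : ℕ → ℝ) (h : ∀ k, 3 ≤ k → F k = 0) :
    HasSum F (F 0 + F 1 + F 2) := by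
  have : HasSum F (∑ b ∈ Finset.range 3, F b) := hasSum_sum_of_ne_finset_zero (by
    intro b hb; exact h b (by simpa using hb))
  simpa [Finset.sum_range_succ] using this

lemma summable_of_mult (g : ℕ → ℝ) (hg0 : ∀ n, 0 ≤ g n) (g0 : g 0 = 0) (g1 : g 1 = 1)
    (hm : ∀ {m n : ℕ}, Nat.Coprime m n → g (m * n) = g m * g n)
    (h3 : ∀ p : ℕ, p.Prime → ∀ k, 3 ≤ k → g (p ^ k) = 0)
    (A : ℕ → ℝ) (hA0 : ∀ n, 0 ≤ A n) (hA : Summable A)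
    (hb : ∀ p : ℕ, p.Prime → g p + g (p ^ 2) ≤ A p) : Summable g := by
  refine summable_of_sum_range_le (c := Real.exp (∑' n, A n)) hg0 ?_
  intro n
  have key : ∀ p : ℕ, p.Prime → HasSum (fun k => g (p ^ k)) (1 + g p + g (p ^ 2)) := by
    intro p hp
    have := tsum_pow_three (fun k => g (p ^ k)) (h3 p hp)
    simpa [g1] using this
  obtain ⟨hs1, hs2⟩ := EulerProduct.summable_and_hasSum_smoothNumbers_prod_primesBelow_tsum
    (f := g) g1 hm (fun {p} hp => (key p hp).summable.norm) n
  have h4 : ∏ p ∈ n.primesBelow, ∑' k : ℕ, g (p ^ k) ≤ Real.exp (∑' n, A n) := by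
    calc ∏ p ∈ n.primesBelow, ∑' k : ℕ, g (p ^ k)
        ≤ ∏ p ∈ n.primesBelow, (1 + A p) := by
          apply Finset.prod_le_prod
          · intro p _; exact tsum_nonneg (fun k => hg0 _)
          · intro p hp
            have hp' := Nat.prime_of_mem_primesBelow hp
            rw [(key p hp').tsum_eq]
            have := hb p hp'
            linarith
      _ ≤ Real.exp (∑ p ∈ n.primesBelow, A p) :=
          Real.prod_one_add_le_exp_sum _ (fun i => hA0 i)
      _ ≤ _ := Real.exp_le_exp.mpr (hA.sum_le_tsum _ (fun i _ => hA0 i))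
  refine le_trans ?_ h4
  have h5 := (hasSum_subtype_iff_indicator (f := g) (s := (n.smoothNumbers : Set ℕ))).mp hs2
  rw [← h5.tsum_eq]
  refine le_trans (le_of_eq ?_) (h5.summable.sum_le_tsum (Finset.range n) ?_)
  · apply Finset.sum_congr rfl
    intro i hi
    rcases Nat.eq_zero_or_pos i with rfl | hi0
    · simp [g0, Set.indicator_apply]
    · rw [Set.indicator_of_mem]
      exact Nat.mem_smoothNumbers_of_lt hi0 (by simpa using hi)
  · intro i _
    exact Set.indicator_nonneg (fun x _ => hg0 x) i

lemma hasSum_congr_GY {ι : Type*} {f g : ι → ℝ} {a : ℝ} (h : ∀ i, f i = g i) :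
    HasSum f a ↔ HasSum g a := by rw [funext h]

lemma prime_bounds {p : ℕ} (hp : p.Prime) :
    (2 : ℝ) ≤ p ∧ 0 < (p : ℝ) - 1 ∧ 1 / ((p : ℝ) - 1) ≤ 2 / p ∧ (p : ℝ) / ((p : ℝ) - 1) ≤ 2 := by
  have h2 : (2 : ℝ) ≤ p := by exact_mod_cast hp.two_le
  have h3 : 0 < (p : ℝ) - 1 := by linarith
  refine ⟨h2, h3, ?_, ?_⟩
  · rw [div_le_div_iff₀ h3 (by linarith)]; linarith
  · rw [div_le_iff₀ h3]; linarith

lemma hGY_summable (δ : ℝ) (hδ : 0 < δ) (hδ' : δ ≤ 1 / 4) :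
    Summable (fun n : ℕ => |hGY n| * (n : ℝ) ^ (-(1 / 2 + δ))) := by
  apply summable_of_mult (A := fun n => 4 * (n : ℝ) ^ (-(1 + 2 * δ)))
  · intro n; positivity
  · simp
  · simp [hGY_mult.map_one]
  · intro m n hmn
    rw [hGY_mult.map_mul_of_coprime hmn, abs_mul, Nat.cast_mul,
      Real.mul_rpow (by positivity) (by positivity)]
    ring
  · intro p hp k hk
    rw [hGY_prime_pow hp k hk]; simp
  · intro n; positivity
  · exact (Real.summable_nat_rpow.mpr (by linarith)).mul_left 4
  · intro p hp
    obtain ⟨h2, h3, h4, h5⟩ := prime_bounds hp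
    have hp0 : (0 : ℝ) < p := by linarith
    rw [hGY_prime hp, hGY_prime_sq hp, abs_neg, abs_of_pos (by positivity),
      abs_of_pos (by positivity)]
    have e1 : (((p ^ 2 : ℕ) : ℝ)) ^ (-(1 / 2 + δ)) = (p : ℝ) ^ (-(1 + 2 * δ)) := by
      rw [Nat.cast_pow, ← Real.rpow_natCast, ← Real.rpow_mul hp0.le]
      congr 1; push_cast; ring
    have e2 : 2 / (p : ℝ) * (p : ℝ) ^ (-(1 / 2 + δ)) = 2 * (p : ℝ) ^ (-(3 / 2 + δ)) := by
      rw [show -(3 / 2 + δ) = -(1 / 2 + δ) - 1 by ring, Real.rpow_sub_one hp0.ne']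
      ring
    have e3 : (p : ℝ) ^ (-(3 / 2 + δ)) ≤ (p : ℝ) ^ (-(1 + 2 * δ)) :=
      Real.rpow_le_rpow_of_exponent_le (by linarith) (by linarith)
    have e4 : 0 < (p : ℝ) ^ (-(1 + 2 * δ)) := by positivity
    have e5 : 1 / ((p : ℝ) - 1) * (p : ℝ) ^ (-(1 / 2 + δ)) ≤ 2 / (p : ℝ) * (p : ℝ) ^ (-(1 / 2 + δ)) := by
      gcongr
    rw [e1]
    nlinarith

/-- `f(d) = h(d)/d`. -/
noncomputable def fGY (d : ℕ) : ℝ := hGY d / d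

lemma fGY_abs_rpow (δ : ℝ) (d : ℕ) :
    |fGY d| * (d : ℝ) ^ (1 / 2 - δ) = |hGY d| * (d : ℝ) ^ (-(1 / 2 + δ)) := by
  rcases Nat.eq_zero_or_pos d with rfl | hd
  · simp [fGY]
  · have hd' : (0 : ℝ) < d := by exact_mod_cast hd
    rw [fGY, abs_div, abs_of_pos hd', show -(1 / 2 + δ) = (1 / 2 - δ) - 1 by ring,
      Real.rpow_sub_one hd'.ne']
    ring

lemma fGY_summable_rpow (δ : ℝ) (hδ : 0 < δ) (hδ' : δ ≤ 1 / 4) :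
    Summable (fun d : ℕ => |fGY d| * (d : ℝ) ^ (1 / 2 - δ)) := by
  simpa only [fGY_abs_rpow] using hGY_summable δ hδ hδ'

lemma fGY_zero : fGY 0 = 0 := by simp [fGY]

lemma fGY_summable : Summable (fun d : ℕ => |fGY d|) := by
  refine Summable.of_nonneg_of_le (fun d => abs_nonneg _) ?_
    (fGY_summable_rpow (1 / 4) (by norm_num) le_rfl)
  intro d
  rcases Nat.eq_zero_or_pos d with rfl | hd
  · simp [fGY]
  · have hd' : (1 : ℝ) ≤ d := by exact_mod_cast hd
    exact le_mul_of_one_le_right (abs_nonneg _) (Real.one_le_rpow hd' (by norm_num))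

lemma fGY_summable_log : Summable (fun d : ℕ => |fGY d| * Real.log d) := by
  refine Summable.of_nonneg_of_le (fun d => by
      have := Real.log_natCast_nonneg d
      positivity) ?_
    ((fGY_summable_rpow (1 / 4) (by norm_num) le_rfl).mul_left 4)
  intro d
  have := Real.log_le_rpow_div (x := (d : ℝ)) (by positivity) (ε := 1 / 2 - 1 / 4) (by norm_num)
  have h2 : Real.log (d : ℝ) ≤ 4 * (d : ℝ) ^ ((1 : ℝ) / 2 - 1 / 4) := by
    refine this.trans (le_of_eq ?_); ring
  calc _ ≤ |fGY d| * (4 * (d : ℝ) ^ ((1 : ℝ) / 2 - 1 / 4)) := by gcongr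
    _ = _ := by ring

lemma fGY_one : fGY 1 = 1 := by simp [fGY, hGY_mult.map_one]

lemma fGY_mul {m n : ℕ} (h : Nat.Coprime m n) : fGY (m * n) = fGY m * fGY n := by
  rw [fGY, hGY_mult.map_mul_of_coprime h, Nat.cast_mul, fGY, fGY, mul_div_mul_comm]

lemma fGY_prime {p : ℕ} (hp : p.Prime) : fGY p = 1 / ((p : ℝ) * ((p : ℝ) - 1)) := by
  rw [fGY, hGY_prime hp, div_div, mul_comm]

lemma fGY_prime_sq {p : ℕ} (hp : p.Prime) : fGY (p ^ 2) = - (1 / ((p : ℝ) * ((p : ℝ) - 1))) := by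
  obtain ⟨h2, h3, -, -⟩ := prime_bounds hp
  rw [fGY, hGY_prime_sq hp]; push_cast; field_simp

lemma fGY_prime_pow {p : ℕ} (hp : p.Prime) (k : ℕ) (hk : 3 ≤ k) : fGY (p ^ k) = 0 := by
  rw [fGY, hGY_prime_pow hp k hk, zero_div]

lemma fGY_twist {p : ℕ} (hp : p.Prime) (t : ℝ) (ht : |t| ≤ 1) :
    HasSum (fun d : ℕ => fGY d * t ^ (d.factorization p)) (1 + fGY p * t + fGY (p ^ 2) * t ^ 2) := by
  have hs : Summable (fun d : ℕ => ‖fGY d * t ^ (d.factorization p)‖) := by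
    refine Summable.of_nonneg_of_le (fun d => norm_nonneg _) ?_ fGY_summable
    intro d
    rw [Real.norm_eq_abs, abs_mul, abs_pow]
    exact mul_le_of_le_one_right (abs_nonneg _) (pow_le_one₀ (abs_nonneg _) ht)
  have hprod := EulerProduct.eulerProduct_hasProd (f := fun d : ℕ => fGY d * t ^ (d.factorization p))
    (by simp [fGY_one]) (by
      intro m n hmn
      simp only [Nat.factorization_mul_apply_of_coprime hmn, fGY_mul hmn, pow_add]
      ring) hs (by simp [fGY_zero])
  have hloc : ∀ r : ℕ, r.Prime → ∑' e, fGY (r ^ e) * t ^ ((r ^ e).factorization p) =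
      if r = p then 1 + fGY p * t + fGY (p ^ 2) * t ^ 2 else 1 := by
    intro r hr
    have h := tsum_pow_three (fun e => fGY (r ^ e) * t ^ ((r ^ e).factorization p)) (by
      intro k hk; simp only [fGY_prime_pow hr k hk, zero_mul])
    rw [h.tsum_eq]
    split_ifs with hrp
    · subst hrp
      simp [fGY_one, hr.factorization_self, hr.factorization_pow]
    · simp [fGY_one, hr.factorization, hr.factorization_pow, hrp, fGY_prime hr, fGY_prime_sq hr]
  have h2 : HasProd (fun r : Nat.Primes => ∑' e, fGY ((r : ℕ) ^ e) * t ^ (((r : ℕ) ^ e).factorization p))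
      (1 + fGY p * t + fGY (p ^ 2) * t ^ 2) := by
    have := hasProd_single (f := fun r : Nat.Primes => ∑' e, fGY ((r : ℕ) ^ e) * t ^ (((r : ℕ) ^ e).factorization p))
      (⟨p, hp⟩ : Nat.Primes) (by
        intro r hr
        rw [hloc r r.2, if_neg]
        intro h; exact hr (Subtype.ext h))
    rwa [hloc p hp, if_pos rfl] at this
  have h3 := hprod.unique h2
  rw [← h3]
  exact hs.of_norm.hasSum

lemma fGY_val_le {p : ℕ} (hp : p.Prime) (d : ℕ) (h : fGY d ≠ 0) : d.factorization p ≤ 2 := by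
  by_contra hc
  apply h
  have hd : d ≠ 0 := by rintro rfl; exact h fGY_zero
  rw [← Nat.ordProj_mul_ordCompl_eq_self d p, fGY_mul, fGY_prime_pow hp _ (by omega), zero_mul]
  exact (Nat.coprime_ordCompl hp hd).pow_left _

lemma fGY_val {p : ℕ} (hp : p.Prime) :
    HasSum (fun d : ℕ => fGY d * (d.factorization p : ℝ)) (- (1 / ((p : ℝ) * ((p : ℝ) - 1)))) := by
  have h1 := (fGY_twist hp 1 (by simp)).mul_left (3 / 2)
  have h2 := (fGY_twist hp (-1) (by simp)).mul_left (1 / 2)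
  have h3 := (fGY_twist hp 0 (by simp)).mul_left 2
  have h := (h1.add h2).sub h3
  have hv : 3 / 2 * (1 + fGY p * 1 + fGY (p ^ 2) * 1 ^ 2)
      + 1 / 2 * (1 + fGY p * -1 + fGY (p ^ 2) * (-1) ^ 2)
      - 2 * (1 + fGY p * 0 + fGY (p ^ 2) * 0 ^ 2) = - (1 / ((p : ℝ) * ((p : ℝ) - 1))) := by
    rw [fGY_prime hp, fGY_prime_sq hp]; ring
  rw [hv] at h
  refine (hasSum_congr_GY fun d => ?_).mp h
  by_cases hf : fGY d = 0
  · simp [hf]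
  · have := fGY_val_le hp d hf
    interval_cases (d.factorization p) <;> simp <;> ring

lemma log_hasSum_primes (d : ℕ) :
    HasSum (fun p : Nat.Primes => (d.factorization p : ℝ) * Real.log (p : ℕ)) (Real.log d) := by
  have h1 : HasSum (fun p : ℕ => (d.factorization p : ℝ) * Real.log p) (Real.log d) := by
    rw [Real.log_nat_eq_sum_factorization]
    apply hasSum_sum_of_ne_finset_zero
    intro b hb
    rw [Finsupp.notMem_support_iff.mp hb]; simp
  refine (hasSum_subtype_iff_of_support_subset (s := {p : ℕ | p.Prime}) ?_).mpr h1
  intro p hp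
  by_contra hc
  apply hp
  simp [Nat.factorization_eq_zero_of_not_prime d hc]

lemma fGY_log : HasSum (fun d : ℕ => fGY d * Real.log d)
    (- ∑' p : Nat.Primes, Real.log (p : ℕ) / (((p : ℕ) : ℝ) * (((p : ℕ) : ℝ) - 1))) := by
  have hΦ : Summable (fun x : ℕ × Nat.Primes =>
      fGY x.1 * ((x.1.factorization x.2 : ℝ) * Real.log (x.2 : ℕ))) := by
    apply Summable.of_norm
    have e : ∀ x : ℕ × Nat.Primes, ‖fGY x.1 * ((x.1.factorization x.2 : ℝ) * Real.log (x.2 : ℕ))‖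
        = |fGY x.1| * ((x.1.factorization x.2 : ℝ) * Real.log (x.2 : ℕ)) := by
      intro x
      have := Real.log_natCast_nonneg (x.2 : ℕ)
      rw [norm_mul, Real.norm_eq_abs, Real.norm_of_nonneg (by positivity)]
    simp_rw [e]
    rw [summable_prod_of_nonneg]
    · constructor
      · intro d
        exact ((log_hasSum_primes d).mul_left |fGY d|).summable
      · refine (summable_congr fun d => ?_).mpr fGY_summable_log
        exact ((log_hasSum_primes d).mul_left |fGY d|).tsum_eq
    · intro x
      have := Real.log_natCast_nonneg (x.2 : ℕ)
      show 0 ≤ _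
      positivity
  have h1 : HasSum (fun d : ℕ => fGY d * Real.log d) (∑' x : ℕ × Nat.Primes,
      fGY x.1 * ((x.1.factorization x.2 : ℝ) * Real.log (x.2 : ℕ))) :=
    hΦ.hasSum.prod_fiberwise (fun d => (log_hasSum_primes d).mul_left _)
  have h2 := ((Equiv.prodComm Nat.Primes ℕ).hasSum_iff.mpr hΦ.hasSum).prod_fiberwise
    (g := fun p : Nat.Primes => - (Real.log (p : ℕ) / (((p : ℕ) : ℝ) * (((p : ℕ) : ℝ) - 1)))) (by
      intro p
      have := (fGY_val p.2).mul_right (Real.log (p : ℕ))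
      have hv : -(1 / (((p : ℕ) : ℝ) * (((p : ℕ) : ℝ) - 1))) * Real.log (p : ℕ)
          = - (Real.log (p : ℕ) / (((p : ℕ) : ℝ) * (((p : ℕ) : ℝ) - 1))) := by ring
      rw [hv] at this
      refine (hasSum_congr_GY fun d => ?_).mp this
      simp only [Function.comp, Equiv.prodComm_apply, Prod.swap]
      ring)
  rw [← tsum_neg, h2.tsum_eq]
  exact h1

/-- `G(n) = μ²(n)/φ(n)`. -/
noncomputable def GG (n : ℕ) : ℝ := (ArithmeticFunction.moebius n : ℝ) ^ 2 / (n.totient : ℝ)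

lemma GG_nonneg (n : ℕ) : 0 ≤ GG n := by unfold GG; positivity

lemma Icc_one_eq_Ioc (M : ℕ) : Finset.Icc 1 M = Finset.Ioc 0 M := by
  ext x; simp only [Finset.mem_Icc, Finset.mem_Ioc]; omega

lemma GG_sum_eq (M : ℕ) : ∑ r ∈ Finset.Icc 1 M, GG r =
    ∑ d ∈ Finset.Icc 1 M, fGY d * ((harmonic (M / d) : ℚ) : ℝ) := by
  let F : ArithmeticFunction ℝ := ⟨fGY, fGY_zero⟩
  let I : ArithmeticFunction ℝ := ⟨fun n => (n : ℝ)⁻¹, by simp⟩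
  have h := ArithmeticFunction.sum_Ioc_mul_eq_sum_sum F I M
  rw [Icc_one_eq_Ioc]
  have h1 : ∀ r ∈ Finset.Ioc 0 M, (F * I) r = GG r := by
    intro r hr
    have hr0 : (r : ℝ) ≠ 0 := by
      have := (Finset.mem_Ioc.mp hr).1
      positivity
    rw [ArithmeticFunction.mul_apply]
    have : ∀ x ∈ r.divisorsAntidiagonal, F x.1 * I x.2 = hGY x.1 / r := by
      intro x hx
      obtain ⟨hx1, -⟩ := Nat.mem_divisorsAntidiagonal.mp hx
      show fGY x.1 * (x.2 : ℝ)⁻¹ = _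
      rw [fGY, ← hx1]; push_cast
      rw [div_mul_eq_div_div]; rfl
    rw [Finset.sum_congr rfl this, ← Finset.sum_div,
      Nat.sum_divisorsAntidiagonal (fun d _ => hGY d), hGY_sum, uGY_apply]
    field_simp
    rfl
  rw [← Finset.sum_congr rfl h1, h]
  apply Finset.sum_congr rfl
  intro d _
  congr 1
  rw [harmonic_eq_sum_Icc, Icc_one_eq_Ioc]
  push_cast
  rfl

lemma harmonic_bound (a : ℝ) (ha : 0 < a) (ha1 : a ≤ 1) (y : ℝ) (hy : 0 < y) :
    |((harmonic ⌊y⌋₊ : ℚ) : ℝ) - Real.log y - Real.eulerMascheroniConstant|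
      ≤ (2 + 1 / a) * y ^ (-a) := by
  have hγ1 := Real.one_half_lt_eulerMascheroniConstant
  have hγ2 := Real.eulerMascheroniConstant_lt_two_thirds
  have hpos : 0 < y ^ (-a) := by positivity
  rcases le_or_gt 1 y with h1 | h1
  · set n := ⌊y⌋₊ with hn
    have hn1 : 1 ≤ n := (Nat.one_le_floor_iff y).mpr h1
    have hn1' : (1 : ℝ) ≤ n := by exact_mod_cast hn1
    have hny : (n : ℝ) ≤ y := Nat.floor_le hy.le
    have hyn : y < n + 1 := Nat.lt_floor_add_one y
    have e1 := Real.eulerMascheroniSeq_lt_eulerMascheroniConstant n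
    have e2 := Real.eulerMascheroniConstant_lt_eulerMascheroniSeq' n
    rw [Real.eulerMascheroniSeq] at e1
    rw [Real.eulerMascheroniSeq', if_neg (by omega)] at e2
    have l1 : Real.log (n + 1) - Real.log y ≤ 1 / y := by
      rw [← Real.log_div (by positivity) (by positivity)]
      refine (Real.log_le_sub_one_of_pos (by positivity)).trans ?_
      rw [div_sub_one hy.ne', div_le_div_iff_of_pos_right hy]; linarith
    have l2 : Real.log y - Real.log n ≤ 2 / y := by
      rw [← Real.log_div (by positivity) (by positivity)]
      refine (Real.log_le_sub_one_of_pos (by positivity)).trans ?_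
      rw [div_sub_one (by positivity), div_le_div_iff₀ (by positivity) hy]; nlinarith
    have l3 : 1 / y ≤ 2 / y := by gcongr; norm_num
    have l4 : 1 / y ≤ y ^ (-a) := by
      rw [one_div, ← Real.rpow_neg_one]
      exact Real.rpow_le_rpow_of_exponent_le h1 (by linarith)
    have l5 : 2 / y = 2 * (1 / y) := by ring
    have l6 : 0 < 1 / a := by positivity
    have l7 : 2 / y ≤ (2 + 1 / a) * y ^ (-a) := by nlinarith
    rw [abs_le]; constructor <;> linarith
  · rw [Nat.floor_eq_zero.mpr h1, harmonic_zero, Rat.cast_zero, zero_sub]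
    have l1 : 1 ≤ y ^ (-a) := Real.one_le_rpow_of_pos_of_le_one_of_nonpos hy h1.le (by linarith)
    have l2 : - Real.log y ≤ (1 / a) * y ^ (-a) := by
      have := Real.log_le_rpow_div (x := y⁻¹) (by positivity) ha
      rw [Real.log_inv, Real.inv_rpow hy.le, ← Real.rpow_neg hy.le] at this
      refine this.trans (le_of_eq (by ring))
    have l3 : Real.log y ≤ 0 := Real.log_nonpos hy.le h1.le
    have l4 : 0 ≤ (1 / a) * y ^ (-a) := by positivity
    rw [abs_le]; constructor <;> nlinarith

lemma GG_asymp (δ : ℝ) (hδ : 0 < δ) (hδ' : δ ≤ 1 / 4) : ∃ C : ℝ, 0 < C ∧ ∀ R : ℝ, 1 ≤ R →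
    |(∑ r ∈ Finset.Icc 1 ⌊R⌋₊, GG r) - (Real.log R + cGY)| ≤ C * R ^ (-(1 : ℝ) / 2 + δ) := by
  set a : ℝ := 1 / 2 - δ with ha
  have ha0 : 0 < a := by linarith
  have hs := fGY_summable_rpow δ hδ hδ'
  rw [← ha] at hs
  set K := ∑' d : ℕ, |fGY d| * (d : ℝ) ^ a with hK
  have hK0 : 0 ≤ K := tsum_nonneg (fun d => by positivity)
  refine ⟨(2 + 1 / a) * K + 1, by positivity, ?_⟩
  intro R hR
  have hR0 : 0 < R := by linarith
  have hone : HasSum fGY 1 := by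
    have h := fGY_twist Nat.prime_two 1 (by simp)
    rw [fGY_prime Nat.prime_two, fGY_prime_sq Nat.prime_two] at h
    norm_num at h
    exact h
  have hfin : HasSum (fun d : ℕ => fGY d * ((harmonic ⌊R / d⌋₊ : ℚ) : ℝ))
      (∑ r ∈ Finset.Icc 1 ⌊R⌋₊, GG r) := by
    rw [GG_sum_eq]
    simp_rw [Nat.floor_div_natCast]
    apply hasSum_sum_of_ne_finset_zero
    intro d hd
    rcases Nat.eq_zero_or_pos d with rfl | hd0
    · simp [fGY_zero]
    · have : ⌊R⌋₊ < d := by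
        by_contra hc
        exact hd (Finset.mem_Icc.mpr ⟨hd0, by omega⟩)
      rw [Nat.div_eq_of_lt this]; simp
  have hmain : HasSum (fun d : ℕ => fGY d * (Real.log R + Real.eulerMascheroniConstant)
      - fGY d * Real.log d) (Real.log R + cGY) := by
    have := (hone.mul_right (Real.log R + Real.eulerMascheroniConstant)).sub fGY_log
    have hv : 1 * (Real.log R + Real.eulerMascheroniConstant) - -∑' p : Nat.Primes,
        Real.log (p : ℕ) / (((p : ℕ) : ℝ) * (((p : ℕ) : ℝ) - 1)) = Real.log R + cGY := by
      rw [cGY]; ring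
    rw [hv] at this
    exact this
  have hdiff := hfin.sub hmain
  have hbd : ∀ d : ℕ, ‖fGY d * ((harmonic ⌊R / d⌋₊ : ℚ) : ℝ) -
      (fGY d * (Real.log R + Real.eulerMascheroniConstant) - fGY d * Real.log d)‖
      ≤ (2 + 1 / a) * R ^ (-a) * (|fGY d| * (d : ℝ) ^ a) := by
    intro d
    rcases Nat.eq_zero_or_pos d with rfl | hd0
    · simp [fGY_zero]
    have hd1 : (0 : ℝ) < d := by exact_mod_cast hd0
    have hb := harmonic_bound a ha0 (by linarith) (R / d) (by positivity)
    rw [Real.log_div hR0.ne' hd1.ne', Real.div_rpow hR0.le hd1.le, Real.rpow_neg hd1.le, div_inv_eq_mul] at hb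
    rw [Real.norm_eq_abs]
    have e : fGY d * ((harmonic ⌊R / d⌋₊ : ℚ) : ℝ) -
      (fGY d * (Real.log R + Real.eulerMascheroniConstant) - fGY d * Real.log d)
      = fGY d * (((harmonic ⌊R / d⌋₊ : ℚ) : ℝ) - (Real.log R - Real.log d) - Real.eulerMascheroniConstant) := by ring
    rw [e, abs_mul]
    calc _ ≤ |fGY d| * ((2 + 1 / a) * (R ^ (-a) * (d : ℝ) ^ a)) := by gcongr
      _ = _ := by ring
  have hfinal := tsum_of_norm_bounded (hs.hasSum.mul_left ((2 + 1 / a) * R ^ (-a))) hbd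
  rw [hdiff.tsum_eq, ← hK, Real.norm_eq_abs] at hfinal
  refine hfinal.trans ?_
  rw [show -(1 : ℝ) / 2 + δ = -a by rw [ha]; ring]
  have : 0 < R ^ (-a) := by positivity
  nlinarith

lemma GG_mul {m n : ℕ} (h : Nat.Coprime m n) : GG (m * n) = GG m * GG n := by
  simp only [GG]
  rw [ArithmeticFunction.isMultiplicative_moebius.map_mul_of_coprime h, Nat.totient_mul h]
  push_cast
  rw [mul_pow, mul_div_mul_comm]

lemma GG_one : GG 1 = 1 := by simp [GG]

lemma GG_prime {p : ℕ} (hp : p.Prime) : GG p = 1 / ((p : ℝ) - 1) := by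
  rw [GG, ArithmeticFunction.moebius_apply_prime hp, Nat.totient_prime hp, Nat.cast_sub hp.one_le]
  simp

lemma GG_not_squarefree {n : ℕ} (h : ¬ Squarefree n) : GG n = 0 := by
  rw [GG, ArithmeticFunction.moebius_eq_zero_of_not_squarefree h]; simp

/-- `G` as an arithmetic function. -/
noncomputable def GGa : ArithmeticFunction ℝ := ⟨GG, by simp [GG]⟩

lemma GGa_mult : GGa.IsMultiplicative := ⟨GG_one, fun h => GG_mul h⟩

lemma GG_prod {r : ℕ} (hr : Squarefree r) : GG r = ∏ p ∈ r.primeFactors, (1 / ((p : ℝ) - 1)) := by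
  have h1 : GGa (∏ p ∈ r.primeFactors, p) = ∏ p ∈ r.primeFactors, GGa p :=
    GGa_mult.map_prod_of_subset_primeFactors r _ (fun _ h => h)
  rw [Nat.prod_primeFactors_of_squarefree hr] at h1
  show GGa r = _
  rw [h1]
  exact Finset.prod_congr rfl (fun p hp => GG_prime (Nat.prime_of_mem_primeFactors hp))

/-- `w(d) = G(d) τ(d)`. -/
noncomputable def wwGY : ArithmeticFunction ℝ :=
  GGa.pmul ((ArithmeticFunction.sigma 0 : ArithmeticFunction ℕ) : ArithmeticFunction ℝ)

lemma wwGY_mult : wwGY.IsMultiplicative :=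
  GGa_mult.pmul ArithmeticFunction.isMultiplicative_sigma.natCast

lemma wwGY_nonneg (d : ℕ) : 0 ≤ wwGY d := by
  simp only [wwGY, ArithmeticFunction.pmul_apply, ArithmeticFunction.natCoe_apply]
  exact mul_nonneg (GG_nonneg _) (Nat.cast_nonneg _)

lemma wwGY_prime {p : ℕ} (hp : p.Prime) : wwGY p = 2 / ((p : ℝ) - 1) := by
  simp only [wwGY, ArithmeticFunction.pmul_apply, ArithmeticFunction.natCoe_apply]
  rw [show GGa p = GG p from rfl, GG_prime hp, ArithmeticFunction.sigma_zero_apply, hp.divisors,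
    Finset.card_pair hp.one_lt.ne]
  push_cast; ring

lemma wwGY_pow {p : ℕ} (hp : p.Prime) (k : ℕ) (hk : 2 ≤ k) : wwGY (p ^ k) = 0 := by
  simp only [wwGY, ArithmeticFunction.pmul_apply]
  rw [show GGa (p ^ k) = GG (p ^ k) from rfl, GG, ArithmeticFunction.moebius_apply_prime_pow hp (by omega)]
  simp [show k ≠ 1 by omega]

lemma wwGY_summable : Summable (fun d : ℕ => wwGY d / d) := by
  refine summable_of_mult (fun d : ℕ => wwGY d / d) ?_ ?_ ?_ ?_ ?_
    (fun n : ℕ => 4 * (1 / (n : ℝ) ^ 2)) ?_ ?_ ?_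
  · intro n; have := wwGY_nonneg n; positivity
  · simp
  · simp [wwGY_mult.map_one]
  · intro m n hmn
    rw [wwGY_mult.map_mul_of_coprime hmn, Nat.cast_mul, mul_div_mul_comm]
  · intro p hp k hk
    rw [wwGY_pow hp k (by omega), zero_div]
  · intro n; positivity
  · exact (Real.summable_one_div_nat_pow.mpr (by norm_num)).mul_left 4
  · intro p hp
    obtain ⟨h2, h3, h4, h5⟩ := prime_bounds hp
    rw [wwGY_prime hp, wwGY_pow hp 2 le_rfl, zero_div, add_zero]
    have : 2 / ((p : ℝ) - 1) ≤ 4 / p := by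
      calc 2 / ((p : ℝ) - 1) = 2 * (1 / ((p : ℝ) - 1)) := by ring
        _ ≤ 2 * (2 / p) := by gcongr
        _ = _ := by ring
    calc _ ≤ 4 / (p : ℝ) / p := by gcongr
      _ = _ := by field_simp

lemma GG_sigma_le (r : ℕ) :
    GG r * ∑ d ∈ r.divisors, (d : ℝ) * |(ArithmeticFunction.moebius d : ℝ)|
      ≤ ∑ d ∈ r.divisors, wwGY d := by
  by_cases hr : Squarefree r
  swap
  · rw [GG_not_squarefree hr, zero_mul]
    exact Finset.sum_nonneg (fun d _ => wwGY_nonneg d)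
  have h1 : ∑ d ∈ r.divisors, (d : ℝ) * |(ArithmeticFunction.moebius d : ℝ)|
      ≤ ∑ d ∈ r.divisors, (d : ℝ) := by
    apply Finset.sum_le_sum
    intro d _
    have : |(ArithmeticFunction.moebius d : ℝ)| ≤ 1 := by
      have := ArithmeticFunction.abs_moebius_le_one (n := d)
      exact_mod_cast this
    exact mul_le_of_le_one_right (Nat.cast_nonneg _) this
  have h2 : ∑ d ∈ r.divisors, (d : ℝ) = ∏ p ∈ r.primeFactors, (1 + (p : ℝ)) := by
    have := (ArithmeticFunction.isMultiplicative_id.natCast (R := ℝ)).prodPrimeFactors_one_add_of_squarefree hr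
    simpa using this.symm
  have h3 : ∑ d ∈ r.divisors, wwGY d = ∏ p ∈ r.primeFactors, (1 + wwGY p) :=
    (wwGY_mult.prodPrimeFactors_one_add_of_squarefree hr).symm
  calc _ ≤ GG r * ∏ p ∈ r.primeFactors, (1 + (p : ℝ)) := by
        rw [← h2]; exact mul_le_mul_of_nonneg_left h1 (GG_nonneg _)
    _ = ∏ p ∈ r.primeFactors, (1 + wwGY p) := by
        rw [GG_prod hr, ← Finset.prod_mul_distrib]
        apply Finset.prod_congr rfl
        intro p hp
        have hp' := Nat.prime_of_mem_primeFactors hp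
        obtain ⟨_, h, -, -⟩ := prime_bounds hp'
        rw [wwGY_prime hp']; field_simp; ring
    _ ≤ _ := h3.ge

lemma GG_sigma_sum : ∃ C : ℝ, 0 < C ∧ ∀ M : ℕ, ∑ r ∈ Finset.Icc 1 M,
    GG r * ∑ d ∈ r.divisors, (d : ℝ) * |(ArithmeticFunction.moebius d : ℝ)| ≤ C * M := by
  refine ⟨∑' d : ℕ, wwGY d / d + 1, ?_, ?_⟩
  · have : 0 ≤ ∑' d : ℕ, wwGY d / d := tsum_nonneg (fun d => div_nonneg (wwGY_nonneg d) (Nat.cast_nonneg _))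
    linarith
  intro M
  calc _ ≤ ∑ r ∈ Finset.Icc 1 M, ∑ d ∈ r.divisors, wwGY d :=
        Finset.sum_le_sum (fun r _ => GG_sigma_le r)
    _ = ∑ d ∈ Finset.Ioc 0 M, wwGY d * ((M / d : ℕ) : ℝ) := by
        rw [Icc_one_eq_Ioc, ← ArithmeticFunction.sum_Ioc_mul_zeta_eq_sum]
        simp_rw [ArithmeticFunction.coe_mul_zeta_apply]
    _ ≤ ∑ d ∈ Finset.Ioc 0 M, (wwGY d / d) * M := by
        apply Finset.sum_le_sum
        intro d _
        calc _ ≤ wwGY d * ((M : ℝ) / d) :=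
              mul_le_mul_of_nonneg_left Nat.cast_div_le (wwGY_nonneg d)
          _ = _ := by ring
    _ = (∑ d ∈ Finset.Ioc 0 M, wwGY d / d) * M := by rw [Finset.sum_mul]
    _ ≤ _ := by
        gcongr
        have := wwGY_summable.sum_le_tsum (Finset.Ioc 0 M)
          (fun d _ => div_nonneg (wwGY_nonneg d) (Nat.cast_nonneg _))
        linarith

lemma count_bound (N q a m : ℕ) (hq : 1 ≤ q) (hm : 1 ≤ m) (hco : Nat.Coprime q m) :
    |((((Finset.Icc 1 N).filter (fun n : ℕ => (n : ZMod q) = (a : ZMod q))).filter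
      (fun n => m ∣ n)).card : ℝ) - (N : ℝ) / ((q : ℝ) * m)| ≤ 1 := by
  obtain ⟨v, hv1, hv2⟩ := Nat.chineseRemainder hco a 0
  have hr : 0 < q * m := by positivity
  have e : ((Finset.Icc 1 N).filter (fun n : ℕ => (n : ZMod q) = (a : ZMod q))).filter
      (fun n => m ∣ n) = {x ∈ Finset.Ioc 0 N | x ≡ v [MOD (q * m)]} := by
    rw [Icc_one_eq_Ioc, Finset.filter_filter]
    apply Finset.filter_congr
    intro x _
    rw [ZMod.natCast_eq_natCast_iff, ← Nat.modEq_and_modEq_iff_modEq_mul hco]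
    constructor
    · rintro ⟨h1, h2⟩
      exact ⟨h1.trans hv1.symm, ((Nat.modEq_zero_iff_dvd.mpr h2)).trans hv2.symm⟩
    · rintro ⟨h1, h2⟩
      exact ⟨h1.trans hv1, Nat.modEq_zero_iff_dvd.mp (h2.trans hv2)⟩
  rw [e]
  have h := Nat.Ioc_filter_modEq_card 0 N hr v
  have f1 : ((⌊((N : ℚ) - v) / ((q * m : ℕ) : ℚ)⌋ : ℤ) : ℚ) ≤ ((N : ℚ) - v) / ((q * m : ℕ) : ℚ) := Int.floor_le _
  have f2 := Int.lt_floor_add_one (((N : ℚ) - v) / ((q * m : ℕ) : ℚ))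
  have f3 : ((⌊(((0 : ℕ) : ℚ) - v) / ((q * m : ℕ) : ℚ)⌋ : ℤ) : ℚ) ≤ (((0 : ℕ) : ℚ) - v) / ((q * m : ℕ) : ℚ) := Int.floor_le _
  have f4 := Int.lt_floor_add_one ((((0 : ℕ) : ℚ) - v) / ((q * m : ℕ) : ℚ))
  have hmono : ⌊(((0 : ℕ) : ℚ) - v) / ((q * m : ℕ) : ℚ)⌋ ≤ ⌊((N : ℚ) - v) / ((q * m : ℕ) : ℚ)⌋ := by
    apply Int.floor_le_floor
    gcongr
    simp
  rw [max_eq_left (by linarith)] at h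
  generalize ⌊((N : ℚ) - v) / ((q * m : ℕ) : ℚ)⌋ = A at *
  generalize ⌊(((0 : ℕ) : ℚ) - v) / ((q * m : ℕ) : ℚ)⌋ = B at *
  have key : |((({x ∈ Finset.Ioc 0 N | x ≡ v [MOD (q * m)]}).card : ℕ) : ℚ) - (N : ℚ) / ((q : ℚ) * m)| ≤ 1 := by
    have h' : ((({x ∈ Finset.Ioc 0 N | x ≡ v [MOD (q * m)]}).card : ℕ) : ℚ) = A - B := by
      exact_mod_cast h
    rw [h']
    have g1 : ((N : ℚ) - v) / ((q * m : ℕ) : ℚ) = (N : ℚ) / ((q : ℚ) * m) - v / ((q : ℚ) * m) := by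
      push_cast; ring
    have g2 : (((0 : ℕ) : ℚ) - v) / ((q * m : ℕ) : ℚ) = - (v / ((q : ℚ) * m)) := by
      push_cast; ring
    rw [g1] at f1 f2
    rw [g2] at f3 f4
    rw [abs_le]; constructor <;> linarith
  have key2 := (Rat.cast_le (K := ℝ)).mpr key
  push_cast at key2
  exact key2

/-- The indices `d ≤ M` coprime to `q`. -/
def DqGY (M q : ℕ) : Finset ℕ := (Finset.Icc 1 M).filter (fun d => Nat.Coprime d q)

lemma mem_DqGY {M q d : ℕ} : d ∈ DqGY M q ↔ (1 ≤ d ∧ d ≤ M) ∧ Nat.Coprime d q := by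
  simp [DqGY]

/-- Coefficients `a_d = d μ(d) ∑_{r ≤ M, d ∣ r} G(r)`. -/
noncomputable def AGY (M d : ℕ) : ℝ :=
  (d : ℝ) * (ArithmeticFunction.moebius d : ℝ) * ∑ r ∈ (Finset.Icc 1 M).filter (fun r => d ∣ r), GG r

lemma divisors_eq_filter {M r : ℕ} (h1 : 1 ≤ r) (h2 : r ≤ M) :
    r.divisors = (Finset.Icc 1 M).filter (fun d => d ∣ r) := by
  ext d
  simp only [Nat.mem_divisors, Finset.mem_filter, Finset.mem_Icc]
  constructor
  · rintro ⟨h, _⟩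
    exact ⟨⟨Nat.pos_of_dvd_of_pos h h1, (Nat.le_of_dvd h1 h).trans h2⟩, h⟩
  · rintro ⟨_, h⟩
    exact ⟨h, by omega⟩

lemma lamR_eq (R : ℝ) (q n : ℕ) (hn : Nat.Coprime n q) :
    lamR R n = ∑ d ∈ DqGY ⌊R⌋₊ q, if d ∣ n then AGY ⌊R⌋₊ d else 0 := by
  set M := ⌊R⌋₊ with hM
  have h1 : lamR R n = ∑ d ∈ Finset.Icc 1 M, if d ∣ n then AGY M d else 0 := by
    rw [lamR, ← hM]
    have : ∀ r ∈ Finset.Icc 1 M, ((ArithmeticFunction.moebius r : ℝ) ^ 2 / (r.totient : ℝ)) *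
        ∑ d ∈ (Nat.gcd r n).divisors, (d : ℝ) * (ArithmeticFunction.moebius d : ℝ)
        = ∑ d ∈ Finset.Icc 1 M, if d ∣ n then (if d ∣ r then
          (d : ℝ) * (ArithmeticFunction.moebius d : ℝ) * GG r else 0) else 0 := by
      intro r hr
      obtain ⟨hr1, hr2⟩ := Finset.mem_Icc.mp hr
      have hg : 1 ≤ Nat.gcd r n := Nat.gcd_pos_of_pos_left _ hr1
      rw [divisors_eq_filter hg ((Nat.gcd_le_left _ hr1).trans hr2), Finset.sum_filter, Finset.mul_sum]
      apply Finset.sum_congr rfl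
      intro d _
      by_cases hdn : d ∣ n <;> by_cases hdr : d ∣ r <;> simp [hdn, hdr, Nat.dvd_gcd_iff, GG]
      ring
    rw [Finset.sum_congr rfl this, Finset.sum_comm]
    apply Finset.sum_congr rfl
    intro d _
    split_ifs with hdn
    · rw [AGY, Finset.mul_sum, Finset.sum_filter]
    · simp
  rw [h1, DqGY, Finset.sum_filter]
  apply Finset.sum_congr rfl
  intro d _
  by_cases hdn : d ∣ n
  · rw [if_pos (Nat.Coprime.coprime_dvd_left hdn hn)]
  · simp [hdn]

lemma AGY_sum_abs : ∃ C : ℝ, 0 < C ∧ ∀ M : ℕ, ∑ d ∈ Finset.Icc 1 M, |AGY M d| ≤ C * M := by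
  obtain ⟨C, hC, h⟩ := GG_sigma_sum
  refine ⟨C, hC, fun M => le_trans (le_of_eq ?_) (h M)⟩
  have e1 : ∀ d ∈ Finset.Icc 1 M, |AGY M d| = ∑ r ∈ Finset.Icc 1 M,
      if d ∣ r then GG r * ((d : ℝ) * |(ArithmeticFunction.moebius d : ℝ)|) else 0 := by
    intro d _
    rw [AGY, abs_mul, abs_mul, Nat.abs_cast,
      abs_of_nonneg (Finset.sum_nonneg (fun r _ => GG_nonneg r)), Finset.mul_sum, Finset.sum_filter]
    apply Finset.sum_congr rfl
    intro r _
    split_ifs <;> ring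
  rw [Finset.sum_congr rfl e1, Finset.sum_comm]
  apply Finset.sum_congr rfl
  intro r hr
  obtain ⟨hr1, hr2⟩ := Finset.mem_Icc.mp hr
  rw [divisors_eq_filter hr1 hr2, Finset.sum_filter, Finset.mul_sum]
  apply Finset.sum_congr rfl
  intro d _
  split_ifs <;> simp

lemma coprime_of_zmod {n a q : ℕ} (h : (n : ZMod q) = (a : ZMod q)) (ha : Nat.gcd a q = 1) :
    Nat.Coprime n q := by
  rw [ZMod.natCast_eq_natCast_iff] at h
  rw [Nat.Coprime, h.gcd_eq, ha]

/-- The quadratic form. -/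
noncomputable def QGY (M q : ℕ) : ℝ :=
  ∑ d ∈ DqGY M q, ∑ e ∈ DqGY M q, AGY M d * AGY M e * (1 / (Nat.lcm d e : ℝ))

lemma lamR_sq_sum : ∃ C : ℝ, 0 < C ∧ ∀ (N q a : ℕ) (R : ℝ),
      1 ≤ q → Nat.gcd a q = 1 → 2 ≤ R →
      |(∑ n ∈ (Finset.Icc 1 N).filter (fun n : ℕ => (n : ZMod q) = (a : ZMod q)),
          (lamR R n) ^ 2) - (N : ℝ) / q * QGY ⌊R⌋₊ q| ≤ C * R ^ 2 := by
  obtain ⟨C, hC, h⟩ := AGY_sum_abs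
  refine ⟨C ^ 2, by positivity, ?_⟩
  intro N q a R hq ha hR
  set M := ⌊R⌋₊ with hM
  set S := (Finset.Icc 1 N).filter (fun n : ℕ => (n : ZMod q) = (a : ZMod q)) with hS
  have e1 : ∑ n ∈ S, (lamR R n) ^ 2 = ∑ d ∈ DqGY M q, ∑ e ∈ DqGY M q,
      AGY M d * AGY M e * ((S.filter (fun n => Nat.lcm d e ∣ n)).card : ℝ) := by
    have : ∀ n ∈ S, (lamR R n) ^ 2 = ∑ d ∈ DqGY M q, ∑ e ∈ DqGY M q,
        AGY M d * AGY M e * (if Nat.lcm d e ∣ n then (1 : ℝ) else 0) := by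
      intro n hn
      rw [lamR_eq R q n (coprime_of_zmod (Finset.mem_filter.mp hn).2 ha), sq, Finset.sum_mul_sum]
      apply Finset.sum_congr rfl
      intro d _
      apply Finset.sum_congr rfl
      intro e _
      rw [← hM]
      by_cases h1 : d ∣ n <;> by_cases h2 : e ∣ n <;> simp [h1, h2, Nat.lcm_dvd_iff]
    rw [Finset.sum_congr rfl this, Finset.sum_comm]
    apply Finset.sum_congr rfl
    intro d _
    rw [Finset.sum_comm]
    apply Finset.sum_congr rfl
    intro e _
    rw [← Finset.mul_sum, Finset.sum_boole]
  have e2 : ∑ n ∈ S, (lamR R n) ^ 2 - (N : ℝ) / q * QGY M q = ∑ d ∈ DqGY M q, ∑ e ∈ DqGY M q,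
      AGY M d * AGY M e * (((S.filter (fun n => Nat.lcm d e ∣ n)).card : ℝ)
        - (N : ℝ) / ((q : ℝ) * (Nat.lcm d e : ℕ))) := by
    rw [e1, QGY, Finset.mul_sum, ← Finset.sum_sub_distrib]
    apply Finset.sum_congr rfl
    intro d _
    rw [Finset.mul_sum, ← Finset.sum_sub_distrib]
    apply Finset.sum_congr rfl
    intro e _
    rw [div_mul_eq_div_div]
    ring
  rw [e2]
  have hsub : ∑ d ∈ DqGY M q, |AGY M d| ≤ C * M := by
    refine le_trans (Finset.sum_le_sum_of_subset_of_nonneg (Finset.filter_subset _ _) ?_) (h M)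
    intro i _ _; exact abs_nonneg _
  calc _ ≤ ∑ d ∈ DqGY M q, ∑ e ∈ DqGY M q, |AGY M d| * |AGY M e| := by
        refine (Finset.abs_sum_le_sum_abs _ _).trans (Finset.sum_le_sum fun d hd => ?_)
        refine (Finset.abs_sum_le_sum_abs _ _).trans (Finset.sum_le_sum fun e he => ?_)
        obtain ⟨⟨hd1, _⟩, hd2⟩ := mem_DqGY.mp hd
        obtain ⟨⟨he1, _⟩, he2⟩ := mem_DqGY.mp he
        rw [abs_mul, abs_mul]
        refine mul_le_of_le_one_right (by positivity) ?_
        refine count_bound N q a (Nat.lcm d e) hq (Nat.lcm_pos hd1 he1) ?_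
        exact (Nat.Coprime.coprime_dvd_left (Nat.lcm_dvd_mul d e) (Nat.Coprime.mul_left hd2 he2)).symm
    _ = (∑ d ∈ DqGY M q, |AGY M d|) ^ 2 := by rw [sq, Finset.sum_mul_sum]
    _ ≤ (C * M) ^ 2 := by
        gcongr
    _ ≤ C ^ 2 * R ^ 2 := by
        rw [mul_pow]
        have : (M : ℝ) ≤ R := Nat.floor_le (by linarith)
        gcongr

lemma sum_moebius_coprime (s q : ℕ) (hs : Squarefree s) :
    ∑ m ∈ s.divisors.filter (fun m => Nat.Coprime m q), (ArithmeticFunction.moebius m : ℝ)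
      = if s ∣ q then 1 else 0 := by
  have hs0 : s ≠ 0 := hs.ne_zero
  have hg : Nat.gcd s q ∣ s := Nat.gcd_dvd_left _ _
  obtain ⟨t, ht⟩ := hg
  have ht0 : t ≠ 0 := by rintro rfl; simp at ht; exact hs0 ht
  have hg0 : 0 < Nat.gcd s q := Nat.gcd_pos_of_pos_left _ (Nat.pos_of_ne_zero hs0)
  have hcop : Nat.Coprime (Nat.gcd s q) t := by
    rw [ht] at hs
    exact Nat.coprime_of_squarefree_mul hs
  have htq : Nat.Coprime t q := by
    have h1 : Nat.gcd t q ∣ Nat.gcd s q :=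
      Nat.gcd_dvd_gcd_of_dvd_left _ ⟨Nat.gcd s q, by rw [mul_comm]; exact ht⟩
    have h2 : Nat.gcd t q ∣ t := Nat.gcd_dvd_left _ _
    exact Nat.eq_one_of_dvd_coprimes hcop h1 h2
  have e : s.divisors.filter (fun m => Nat.Coprime m q) = t.divisors := by
    ext m
    simp only [Finset.mem_filter, Nat.mem_divisors]
    constructor
    · rintro ⟨⟨h1, _⟩, h2⟩
      refine ⟨?_, ht0⟩
      rw [ht] at h1
      exact (Nat.Coprime.coprime_dvd_right (Nat.gcd_dvd_right s q) h2).dvd_of_dvd_mul_left h1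
    · rintro ⟨h1, _⟩
      exact ⟨⟨h1.trans ⟨Nat.gcd s q, by rw [mul_comm]; exact ht⟩, hs0⟩,
        Nat.Coprime.coprime_dvd_left h1 htq⟩
  rw [e]
  have h1 := congrArg (fun f : ArithmeticFunction ℝ => f t)
    (ArithmeticFunction.coe_moebius_mul_coe_zeta (R := ℝ))
  simp only [ArithmeticFunction.coe_mul_zeta_apply, ArithmeticFunction.one_apply,
    ArithmeticFunction.intCoe_apply] at h1
  rw [h1]
  have : t = 1 ↔ s ∣ q := by
    constructor
    · rintro rfl
      rw [ht, mul_one]; exact Nat.gcd_dvd_right s q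
    · intro h
      rw [Nat.gcd_eq_left h] at ht
      exact Nat.eq_of_mul_eq_mul_left (Nat.pos_of_ne_zero hs0) (by omega)
  simp [this]

lemma inner_moebius (r k q : ℕ) (hr : Squarefree r) (hk : Nat.Coprime k q) :
    ∑ d ∈ r.divisors.filter (fun d => k ∣ d ∧ Nat.Coprime d q), (ArithmeticFunction.moebius d : ℝ)
      = if k ∣ r ∧ r / k ∣ q then (ArithmeticFunction.moebius k : ℝ) else 0 := by
  by_cases hkr : k ∣ r
  swap
  · rw [if_neg (fun h => hkr h.1), Finset.sum_eq_zero]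
    intro d hd
    simp only [Finset.mem_filter, Nat.mem_divisors] at hd
    exact absurd (hd.2.1.trans hd.1.1) hkr
  obtain ⟨s, rfl⟩ := hkr
  have hks : Nat.Coprime k s := Nat.coprime_of_squarefree_mul hr
  have hk0 : 0 < k := Nat.pos_of_ne_zero (by rintro rfl; simp at hr)
  have hs0 : s ≠ 0 := by rintro rfl; simp at hr
  rw [Nat.mul_div_cancel_left _ hk0]
  have hs : Squarefree s := hr.squarefree_of_dvd (Dvd.intro_left k rfl)
  have h := sum_moebius_coprime s q hs
  have e : ∑ d ∈ (k * s).divisors.filter (fun d => k ∣ d ∧ Nat.Coprime d q),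
      (ArithmeticFunction.moebius d : ℝ) =
      ∑ m ∈ s.divisors.filter (fun m => Nat.Coprime m q),
        (ArithmeticFunction.moebius k : ℝ) * (ArithmeticFunction.moebius m : ℝ) := by
    symm
    apply Finset.sum_nbij' (fun m => k * m) (fun d => d / k)
    · intro m hm
      simp only [Finset.mem_filter, Nat.mem_divisors] at hm ⊢
      exact ⟨⟨Nat.mul_dvd_mul_left k hm.1.1, by positivity⟩, Dvd.intro _ rfl,
        Nat.Coprime.mul_left hk hm.2⟩
    · intro d hd
      simp only [Finset.mem_filter, Nat.mem_divisors] at hd ⊢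
      obtain ⟨⟨h1, h2⟩, ⟨m, rfl⟩, h4⟩ := hd
      rw [Nat.mul_div_cancel_left _ hk0]
      exact ⟨⟨Nat.dvd_of_mul_dvd_mul_left hk0 h1, hs0⟩, Nat.Coprime.coprime_mul_left h4⟩
    · intro m _
      exact Nat.mul_div_cancel_left _ hk0
    · intro d hd
      simp only [Finset.mem_filter] at hd
      exact Nat.mul_div_cancel' hd.2.1
    · intro m hm
      simp only [Finset.mem_filter, Nat.mem_divisors] at hm
      rw [ArithmeticFunction.isMultiplicative_moebius.map_mul_of_coprime
        (Nat.Coprime.coprime_dvd_right hm.1.1 hks)]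
      push_cast; rfl
  rw [e, ← Finset.mul_sum, h]
  simp

/-- `S_k = ∑_{s ∣ q, k s ≤ M} G(s)`. -/
noncomputable def SGY (M q k : ℕ) : ℝ := ∑ s ∈ q.divisors.filter (fun s => k * s ≤ M), GG s

lemma b_eq (M q k : ℕ) (hq : 1 ≤ q) (hk : k ∈ DqGY M q) :
    ∑ d ∈ (DqGY M q).filter (fun d => k ∣ d), AGY M d / d
      = (ArithmeticFunction.moebius k : ℝ) * (GG k * SGY M q k) := by
  obtain ⟨⟨hk1, hkM⟩, hkq⟩ := mem_DqGY.mp hk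
  have e1 : ∑ d ∈ (DqGY M q).filter (fun d => k ∣ d), AGY M d / d
      = ∑ r ∈ Finset.Icc 1 M, GG r * ∑ d ∈ r.divisors.filter (fun d => k ∣ d ∧ Nat.Coprime d q),
          (ArithmeticFunction.moebius d : ℝ) := by
    have h1 : ∀ d ∈ (DqGY M q).filter (fun d => k ∣ d), AGY M d / d
        = ∑ r ∈ Finset.Icc 1 M, if d ∣ r then GG r * (ArithmeticFunction.moebius d : ℝ) else 0 := by
      intro d hd
      have hd1 := (mem_DqGY.mp (Finset.mem_filter.mp hd).1).1.1
      have hd0 : (d : ℝ) ≠ 0 := by positivity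
      rw [AGY, mul_assoc, mul_div_cancel_left₀ _ hd0, Finset.mul_sum, Finset.sum_filter]
      apply Finset.sum_congr rfl
      intro r _
      split_ifs <;> ring
    rw [Finset.sum_congr rfl h1, Finset.sum_comm]
    apply Finset.sum_congr rfl
    intro r hr
    obtain ⟨hr1, hr2⟩ := Finset.mem_Icc.mp hr
    rw [divisors_eq_filter hr1 hr2, Finset.mul_sum, ← Finset.sum_filter]
    apply Finset.sum_congr _ (fun _ _ => rfl)
    ext d
    simp only [DqGY, Finset.mem_filter]
    tauto
  rw [e1]
  have e2 : ∀ r ∈ Finset.Icc 1 M, GG r * ∑ d ∈ r.divisors.filter (fun d => k ∣ d ∧ Nat.Coprime d q),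
          (ArithmeticFunction.moebius d : ℝ) =
        if k ∣ r ∧ r / k ∣ q then (ArithmeticFunction.moebius k : ℝ) * GG r else 0 := by
    intro r _
    by_cases hr : Squarefree r
    · rw [inner_moebius r k q hr hkq]
      split_ifs <;> ring
    · rw [GG_not_squarefree hr]; simp
  rw [Finset.sum_congr rfl e2, ← Finset.sum_filter, SGY, Finset.mul_sum, Finset.mul_sum]
  symm
  apply Finset.sum_nbij' (fun s => k * s) (fun r => r / k)
  · intro s hs
    simp only [Finset.mem_filter, Nat.mem_divisors, Finset.mem_Icc] at hs ⊢
    have hs0 : 1 ≤ s := Nat.pos_of_dvd_of_pos hs.1.1 hq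
    refine ⟨⟨Nat.mul_pos hk1 hs0, hs.2⟩, Dvd.intro _ rfl, ?_⟩
    rw [Nat.mul_div_cancel_left _ hk1]; exact hs.1.1
  · intro r hr
    simp only [Finset.mem_filter, Nat.mem_divisors, Finset.mem_Icc] at hr ⊢
    refine ⟨⟨hr.2.2, by omega⟩, ?_⟩
    rw [Nat.mul_div_cancel' hr.2.1]; exact hr.1.2
  · intro s _
    exact Nat.mul_div_cancel_left _ hk1
  · intro r hr
    simp only [Finset.mem_filter] at hr
    exact Nat.mul_div_cancel' hr.2.1
  · intro s hs
    simp only [Finset.mem_filter, Nat.mem_divisors] at hs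
    rw [GG_mul (Nat.Coprime.coprime_dvd_right hs.1.1 hkq)]

lemma QGY_eq (M q : ℕ) (hq : 1 ≤ q) :
    QGY M q = ∑ k ∈ DqGY M q, GG k * SGY M q k ^ 2 := by
  have h1 : QGY M q = ∑ k ∈ DqGY M q, (k.totient : ℝ) *
      (∑ d ∈ (DqGY M q).filter (fun d => k ∣ d), AGY M d / d) ^ 2 := by
    have e : ∀ d ∈ DqGY M q, ∀ e ∈ DqGY M q, AGY M d * AGY M e * (1 / (Nat.lcm d e : ℝ))
        = ∑ k ∈ DqGY M q, (k.totient : ℝ) * ((if k ∣ d then AGY M d / d else 0) *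
          (if k ∣ e then AGY M e / e else 0)) := by
      intro d hd e he
      obtain ⟨⟨hd1, hdM⟩, hdq⟩ := mem_DqGY.mp hd
      obtain ⟨⟨he1, heM⟩, heq⟩ := mem_DqGY.mp he
      have hd0 : (d : ℝ) ≠ 0 := by positivity
      have he0 : (e : ℝ) ≠ 0 := by positivity
      have hl0 : (Nat.lcm d e : ℝ) ≠ 0 := by
        have := Nat.lcm_pos hd1 he1
        positivity
      have hgl : (Nat.gcd d e : ℝ) * (Nat.lcm d e : ℝ) = d * e := by
        exact_mod_cast Nat.gcd_mul_lcm d e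
      have hgs : (Nat.gcd d e : ℝ) = ∑ k ∈ DqGY M q,
          if k ∣ d ∧ k ∣ e then (k.totient : ℝ) else 0 := by
        rw [← Finset.sum_filter]
        conv_lhs => rw [← Nat.sum_totient (Nat.gcd d e)]
        push_cast
        apply Finset.sum_congr _ (fun _ _ => rfl)
        ext k
        simp only [Nat.mem_divisors, Finset.mem_filter, mem_DqGY, Nat.dvd_gcd_iff]
        constructor
        · rintro ⟨⟨h1, h2⟩, _⟩
          exact ⟨⟨⟨Nat.pos_of_dvd_of_pos h1 hd1, (Nat.le_of_dvd hd1 h1).trans hdM⟩,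
            Nat.Coprime.coprime_dvd_left h1 hdq⟩, h1, h2⟩
        · rintro ⟨_, h1, h2⟩
          exact ⟨⟨h1, h2⟩, (Nat.gcd_pos_of_pos_left _ hd1).ne'⟩
      have : AGY M d * AGY M e * (1 / (Nat.lcm d e : ℝ)) =
          (Nat.gcd d e : ℝ) * (AGY M d / d * (AGY M e / e)) := by
        field_simp
        linear_combination (-(AGY M d * AGY M e)) * hgl
      rw [this, hgs, Finset.sum_mul]
      apply Finset.sum_congr rfl
      intro k _
      by_cases h1 : k ∣ d <;> by_cases h2 : k ∣ e <;> simp [h1, h2]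
    rw [QGY]
    rw [Finset.sum_congr rfl (fun d hd => Finset.sum_congr rfl (fun e' he => e d hd e' he))]
    rw [Finset.sum_congr rfl (fun d hd => Finset.sum_comm), Finset.sum_comm]
    apply Finset.sum_congr rfl
    intro k _
    rw [sq, Finset.sum_filter, Finset.sum_mul_sum, Finset.mul_sum]
    apply Finset.sum_congr rfl
    intro d _
    rw [Finset.mul_sum]
  rw [h1]
  apply Finset.sum_congr rfl
  intro k hk
  rw [b_eq M q k hq hk]
  have hk1 := (mem_DqGY.mp hk).1.1
  have hφ : (k.totient : ℝ) ≠ 0 := by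
    have := Nat.totient_pos.mpr hk1
    positivity
  by_cases hs : Squarefree k
  · have hμ : (ArithmeticFunction.moebius k : ℝ) ^ 2 = 1 := by
      have := ArithmeticFunction.moebius_sq_eq_one_of_squarefree hs
      exact_mod_cast this
    rw [mul_pow, hμ, GG, hμ]
    field_simp
  · rw [GG_not_squarefree hs]; simp


lemma pairs_sum (M q : ℕ) (hq : 1 ≤ q) (F : ℕ → ℝ) :
    ∑ k ∈ DqGY M q, ∑ s ∈ q.divisors.filter (fun s => k * s ≤ M), GG k * GG s * F (k * s)
      = ∑ r ∈ Finset.Icc 1 M, GG r * F r := by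
  rw [Finset.sum_sigma']
  refine Finset.sum_bij_ne_zero (fun x _ _ => x.1 * x.2) ?_ ?_ ?_ ?_
  · rintro ⟨k, s⟩ h _
    simp only [Finset.mem_sigma, mem_DqGY, Finset.mem_filter, Nat.mem_divisors,
      Finset.mem_Icc] at h ⊢
    exact ⟨Nat.mul_pos h.1.1.1 (Nat.pos_of_dvd_of_pos h.2.1.1 hq), h.2.2⟩
  · rintro ⟨k, s⟩ h _ ⟨k', s'⟩ h' _ he
    simp only [Finset.mem_sigma, mem_DqGY, Finset.mem_filter, Nat.mem_divisors] at h h' he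
    have e1 : Nat.gcd (k * s) q = s := by
      rw [Nat.Coprime.gcd_mul_left_cancel _ h.1.2]
      exact Nat.gcd_eq_left h.2.1.1
    have e2 : Nat.gcd (k' * s') q = s' := by
      rw [Nat.Coprime.gcd_mul_left_cancel _ h'.1.2]
      exact Nat.gcd_eq_left h'.2.1.1
    have e3 : s = s' := by rw [← e1, ← e2, he]
    subst e3
    have hs : 0 < s := Nat.pos_of_dvd_of_pos h.2.1.1 hq
    have e4 : k = k' := Nat.eq_of_mul_eq_mul_right hs he
    subst e4
    rfl
  · intro r hr hne
    obtain ⟨hr1, hr2⟩ := Finset.mem_Icc.mp hr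
    have hsq : Squarefree r := by
      by_contra h
      rw [GG_not_squarefree h] at hne
      simp at hne
    have hd : Nat.gcd r q ∣ r := Nat.gcd_dvd_left _ _
    have hmul : r / Nat.gcd r q * Nat.gcd r q = r := Nat.div_mul_cancel hd
    have hg0 : 0 < Nat.gcd r q := Nat.gcd_pos_of_pos_left _ hr1
    have hcop : Nat.Coprime (r / Nat.gcd r q) (Nat.gcd r q) := by
      apply Nat.coprime_of_squarefree_mul
      rw [hmul]; exact hsq
    have hkq : Nat.Coprime (r / Nat.gcd r q) q := by
      have h1 : Nat.gcd (r / Nat.gcd r q) q ∣ Nat.gcd r q :=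
        Nat.dvd_gcd ((Nat.gcd_dvd_left _ _).trans (Nat.div_dvd_of_dvd hd)) (Nat.gcd_dvd_right _ _)
      have h2 : Nat.gcd (r / Nat.gcd r q) q ∣ 1 := by
        have := Nat.dvd_gcd (Nat.gcd_dvd_left (r / Nat.gcd r q) q) h1
        rwa [hcop] at this
      exact Nat.dvd_one.mp h2
    refine ⟨⟨r / Nat.gcd r q, Nat.gcd r q⟩, ?_, ?_, hmul⟩
    · simp only [Finset.mem_sigma, mem_DqGY, Finset.mem_filter, Nat.mem_divisors]
      refine ⟨⟨⟨Nat.div_pos (Nat.le_of_dvd hr1 hd) hg0, (Nat.div_le_self _ _).trans hr2⟩, hkq⟩,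
        ⟨Nat.gcd_dvd_right _ _, by omega⟩, ?_⟩
      rw [hmul]; exact hr2
    · simp only
      rw [← GG_mul hcop, hmul]
      exact hne
  · rintro ⟨k, s⟩ h _
    simp only [Finset.mem_sigma, mem_DqGY, Finset.mem_filter, Nat.mem_divisors] at h ⊢
    rw [GG_mul (Nat.Coprime.coprime_dvd_right h.2.1.1 h.1.2)]

lemma sum_divisors_GG (q : ℕ) (hq : 1 ≤ q) (F : ℕ → ℝ) :
    ∑ s ∈ q.divisors, GG s * F s = ∑ T ∈ q.primeFactors.powerset,
      (∏ p ∈ T, 1 / ((p : ℝ) - 1)) * F (∏ p ∈ T, p) := by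
  have h1 : ∑ s ∈ q.divisors, GG s * F s
      = ∑ s ∈ q.divisors.filter Squarefree, GG s * F s := by
    rw [Finset.sum_filter]
    apply Finset.sum_congr rfl
    intro s _
    split_ifs with h
    · rfl
    · rw [GG_not_squarefree h, zero_mul]
  rw [h1]
  symm
  have hpr : ∀ T ∈ q.primeFactors.powerset, ∀ p ∈ T, p.Prime := fun T hT p hp =>
    Nat.prime_of_mem_primeFactors (Finset.mem_powerset.mp hT hp)
  have hsq : ∀ T ∈ q.primeFactors.powerset, Squarefree (∏ p ∈ T, p) := by
    intro T hT
    apply Squarefree.squarefree_of_dvd (Finset.prod_dvd_prod_of_subset _ _ _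
      (Finset.mem_powerset.mp hT))
    apply Finset.squarefree_prod_of_pairwise_isCoprime
    · intro p hp r hr hne
      simp only [Function.onFun]
      rw [← Nat.coprime_iff_isRelPrime]
      exact (Nat.coprime_primes (Nat.prime_of_mem_primeFactors hp)
        (Nat.prime_of_mem_primeFactors hr)).mpr hne
    · intro p hp
      exact (Nat.prime_of_mem_primeFactors hp).prime.irreducible.squarefree
  apply Finset.sum_nbij' (fun T => ∏ p ∈ T, p) (fun s => s.primeFactors)
  · intro T hT
    rw [Finset.mem_filter, Nat.mem_divisors]
    exact ⟨⟨(Finset.prod_dvd_prod_of_subset _ _ _ (Finset.mem_powerset.mp hT)).trans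
      (Nat.prod_primeFactors_dvd q), by omega⟩, hsq T hT⟩
  · intro s hs
    rw [Finset.mem_filter, Nat.mem_divisors] at hs
    rw [Finset.mem_powerset]
    exact Nat.primeFactors_mono hs.1.1 hs.1.2
  · intro T hT
    exact Nat.primeFactors_prod (hpr T hT)
  · intro s hs
    exact Nat.prod_primeFactors_of_squarefree (Finset.mem_filter.mp hs).2
  · intro T hT
    rw [GG_prod (hsq T hT), Nat.primeFactors_prod (hpr T hT)]

lemma powerset_log_sum (P : Finset ℕ) (hP : ∀ p ∈ P, p.Prime) :
    ∑ T ∈ P.powerset, (∏ p ∈ T, 1 / ((p : ℝ) - 1)) * (∑ p ∈ T, Real.log p)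
      = (∏ p ∈ P, (1 + 1 / ((p : ℝ) - 1))) * ∑ p ∈ P, Real.log p / p := by
  induction P using Finset.induction_on with
  | empty => simp
  | insert a P ha ih =>
    have ih' := ih (fun p hp => hP p (Finset.mem_insert_of_mem hp))
    have hap : a.Prime := hP a (Finset.mem_insert_self _ _)
    have ha2 : (2 : ℝ) ≤ a := by exact_mod_cast hap.two_le
    rw [Finset.sum_powerset_insert ha, ih', Finset.prod_insert ha, Finset.sum_insert ha]
    have : ∀ T ∈ P.powerset, (∏ p ∈ insert a T, 1 / ((p : ℝ) - 1)) *
        (∑ p ∈ insert a T, Real.log p) =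
        1 / ((a : ℝ) - 1) * Real.log a * (∏ p ∈ T, 1 / ((p : ℝ) - 1)) + 1 / ((a : ℝ) - 1) *
          ((∏ p ∈ T, 1 / ((p : ℝ) - 1)) * (∑ p ∈ T, Real.log p)) := by
      intro T hT
      have haT : a ∉ T := fun h => ha (Finset.mem_powerset.mp hT h)
      rw [Finset.prod_insert haT, Finset.sum_insert haT]
      ring
    rw [Finset.sum_congr rfl this, Finset.sum_add_distrib, ← Finset.mul_sum, ← Finset.mul_sum,
      ih', ← Finset.prod_one_add]
    have h0 : (a : ℝ) ≠ 0 := by linarith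
    have h1 : (a : ℝ) - 1 ≠ 0 := by linarith
    have h2 : 1 / ((a : ℝ) - 1) * Real.log a = (1 + 1 / ((a : ℝ) - 1)) * (Real.log a / a) := by
      field_simp
      ring
    rw [h2]
    ring

lemma q_div_phi (q : ℕ) (hq : 1 ≤ q) :
    ∏ p ∈ q.primeFactors, (1 + 1 / ((p : ℝ) - 1)) = (q : ℝ) / (q.totient : ℝ) := by
  have h := Nat.totient_eq_mul_prod_factors q
  have h' : (q.totient : ℝ) = q * ∏ p ∈ q.primeFactors, (1 - (p : ℝ)⁻¹) := by
    have h2 := congrArg (fun x : ℚ => (x : ℝ)) h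
    push_cast at h2
    exact h2
  have hφ : (q.totient : ℝ) ≠ 0 := by
    have := Nat.totient_pos.mpr hq
    positivity
  rw [eq_div_iff hφ, h', mul_left_comm, ← Finset.prod_mul_distrib, Finset.prod_eq_one, mul_one]
  intro p hp
  have hp2 : (2 : ℝ) ≤ p := by exact_mod_cast (Nat.prime_of_mem_primeFactors hp).two_le
  have h0 : (p : ℝ) ≠ 0 := by linarith
  have h1 : (p : ℝ) - 1 ≠ 0 := by linarith
  field_simp
  ring

lemma sum_div_GG_one (q : ℕ) (hq : 1 ≤ q) :
    ∑ s ∈ q.divisors, GG s = (q : ℝ) / (q.totient : ℝ) := by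
  have h := sum_divisors_GG q hq (fun _ => 1)
  simp only [mul_one] at h
  rw [h, ← Finset.prod_one_add, q_div_phi q hq]

lemma sum_div_GG_log (q : ℕ) (hq : 1 ≤ q) :
    ∑ s ∈ q.divisors, GG s * Real.log s = (q : ℝ) / (q.totient : ℝ) * vGY q := by
  rw [sum_divisors_GG q hq (fun s => Real.log s), ← q_div_phi q hq, vGY,
    ← powerset_log_sum _ (fun p hp => Nat.prime_of_mem_primeFactors hp)]
  apply Finset.sum_congr rfl
  intro T hT
  push_cast
  rw [Real.log_prod]
  intro p hp
  have := (Nat.prime_of_mem_primeFactors (Finset.mem_powerset.mp hT hp)).pos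
  positivity

lemma tail_bound : ∃ C : ℝ, 0 < C ∧ ∀ M s : ℕ, 1 ≤ M → 1 ≤ s →
    ∑ r ∈ (Finset.Icc 1 M).filter (fun r => M < r * s), GG r ≤ C * Real.log s := by
  obtain ⟨K, hK, hG⟩ := GG_asymp (1 / 4) (by norm_num) le_rfl
  have hG' : ∀ R : ℝ, 1 ≤ R → |(∑ r ∈ Finset.Icc 1 ⌊R⌋₊, GG r) - (Real.log R + cGY)| ≤ K := by
    intro R hR
    refine (hG R hR).trans ?_
    have : R ^ (-(1 : ℝ) / 2 + 1 / 4) ≤ 1 := Real.rpow_le_one_of_one_le_of_nonpos hR (by norm_num)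
    nlinarith
  have hl2 : 0 < Real.log 2 := Real.log_pos (by norm_num)
  have hc : 0 ≤ |cGY| := abs_nonneg _
  refine ⟨1 + (2 * K + |cGY|) / Real.log 2, by positivity, ?_⟩
  intro M s hM hs
  rcases eq_or_lt_of_le hs with h1 | h2
  · subst h1
    rw [Finset.filter_false_of_mem]
    · simp
    · intro r hr
      have := (Finset.mem_Icc.mp hr).2
      omega
  have hs2 : (2 : ℝ) ≤ s := by exact_mod_cast h2
  have hls : Real.log 2 ≤ Real.log s := Real.log_le_log (by norm_num) hs2
  have hM1 : (1 : ℝ) ≤ M := by exact_mod_cast hM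
  have key : ∑ r ∈ (Finset.Icc 1 M).filter (fun r => M < r * s), GG r
      ≤ Real.log s + (2 * K + |cGY|) := by
    have hHM := hG' M hM1
    rw [Nat.floor_natCast] at hHM
    have hHM' := (abs_le.mp hHM).2
    rcases lt_or_ge M s with hlt | hge
    · have h3 : ∑ r ∈ (Finset.Icc 1 M).filter (fun r => M < r * s), GG r
          ≤ ∑ r ∈ Finset.Icc 1 M, GG r :=
        Finset.sum_le_sum_of_subset_of_nonneg (Finset.filter_subset _ _)
          (fun r _ _ => GG_nonneg r)
      have h4 : Real.log M ≤ Real.log s :=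
        Real.log_le_log (by linarith) (by exact_mod_cast hlt.le)
      have := le_abs_self cGY
      linarith
    · have hMs : (1 : ℝ) ≤ (M : ℝ) / s := by
        rw [le_div_iff₀ (by linarith)]
        have : (s : ℝ) ≤ M := by exact_mod_cast hge
        linarith
      have hHs := (abs_le.mp (hG' _ hMs)).1
      rw [Nat.floor_div_eq_div, Real.log_div (by linarith) (by linarith)] at hHs
      have h5 := Finset.sum_filter_add_sum_filter_not (Finset.Icc 1 M) (fun r => M < r * s) GG
      have h6 : (Finset.Icc 1 M).filter (fun r => ¬ M < r * s) = Finset.Icc 1 (M / s) := by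
        ext r
        simp only [Finset.mem_filter, Finset.mem_Icc, not_lt, Nat.le_div_iff_mul_le hs]
        constructor
        · rintro ⟨⟨a, b⟩, c⟩
          exact ⟨a, c⟩
        · rintro ⟨a, c⟩
          exact ⟨⟨a, by nlinarith⟩, c⟩
      rw [h6] at h5
      linarith
  refine key.trans ?_
  have h7 : (2 * K + |cGY|) ≤ (2 * K + |cGY|) / Real.log 2 * Real.log s := by
    rw [div_mul_eq_mul_div, le_div_iff₀ hl2]
    apply mul_le_mul_of_nonneg_left hls
    positivity
  linarith

lemma E_bound : ∃ C : ℝ, 0 < C ∧ ∀ M q : ℕ, 1 ≤ M → 1 ≤ q →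
    |(∑ r ∈ Finset.Icc 1 M, GG r) - (q.totient : ℝ) / q * QGY M q| ≤ C * vGY q := by
  obtain ⟨C, hC, hT⟩ := tail_bound
  refine ⟨C, hC, ?_⟩
  intro M q hM hq
  have hq0 : (0 : ℝ) < q := by positivity
  have hφ : (0 : ℝ) < q.totient := by
    have := Nat.totient_pos.mpr hq
    positivity
  have hH : ∑ r ∈ Finset.Icc 1 M, GG r = ∑ k ∈ DqGY M q, GG k * SGY M q k := by
    have h := pairs_sum M q hq (fun _ => 1)
    simp only [mul_one] at h
    rw [← h]
    apply Finset.sum_congr rfl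
    intro k _
    rw [SGY, Finset.mul_sum]
  have hS0 : ∀ k, 0 ≤ SGY M q k := fun k => Finset.sum_nonneg (fun s _ => GG_nonneg s)
  have hdiff : ∀ k, (q : ℝ) / q.totient - SGY M q k
      = ∑ s ∈ q.divisors, if M < k * s then GG s else 0 := by
    intro k
    rw [← sum_div_GG_one q hq, SGY, Finset.sum_filter, ← Finset.sum_sub_distrib]
    apply Finset.sum_congr rfl
    intro s _
    by_cases h : k * s ≤ M
    · rw [if_pos h, if_neg (not_lt.mpr h), sub_self]
    · rw [if_neg h, if_pos (not_le.mp h), sub_zero]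
  have hE : (∑ r ∈ Finset.Icc 1 M, GG r) - (q.totient : ℝ) / q * QGY M q
      = (q.totient : ℝ) / q * ∑ s ∈ q.divisors, GG s *
        ∑ k ∈ DqGY M q, if M < k * s then GG k * SGY M q k else 0 := by
    have e1 : ∑ s ∈ q.divisors, GG s *
        (∑ k ∈ DqGY M q, if M < k * s then GG k * SGY M q k else 0)
        = ∑ k ∈ DqGY M q, GG k * SGY M q k * ((q : ℝ) / q.totient - SGY M q k) := by
      simp_rw [Finset.mul_sum]
      rw [Finset.sum_comm]
      apply Finset.sum_congr rfl
      intro k _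
      rw [hdiff, Finset.mul_sum]
      apply Finset.sum_congr rfl
      intro s _
      split_ifs <;> ring
    rw [e1, hH, QGY_eq M q hq, Finset.mul_sum, Finset.mul_sum, ← Finset.sum_sub_distrib]
    apply Finset.sum_congr rfl
    intro k _
    field_simp
  have hin : ∀ s ∈ q.divisors,
      (∑ k ∈ DqGY M q, if M < k * s then GG k * SGY M q k else 0) ≤ C * Real.log s := by
    intro s hs
    have hs1 : 1 ≤ s := Nat.pos_of_mem_divisors hs
    refine le_trans ?_ (hT M s hM hs1)
    have h := pairs_sum M q hq (fun r => if M < r * s then 1 else 0)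
    have e2 : ∑ r ∈ (Finset.Icc 1 M).filter (fun r => M < r * s), GG r
        = ∑ r ∈ Finset.Icc 1 M, GG r * (if M < r * s then (1 : ℝ) else 0) := by
      rw [Finset.sum_filter]
      apply Finset.sum_congr rfl
      intro r _
      split_ifs <;> ring
    rw [e2, ← h]
    apply Finset.sum_le_sum
    intro k _
    split_ifs with hks
    · rw [SGY, Finset.mul_sum]
      apply Finset.sum_le_sum
      intro t ht
      have ht1 : 1 ≤ t := Nat.pos_of_mem_divisors (Finset.mem_filter.mp ht).1
      have : M < k * t * s := by
        calc M < k * s := hks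
          _ ≤ k * t * s := Nat.mul_le_mul_right _ (Nat.le_mul_of_pos_right _ ht1)
      rw [if_pos this, mul_one]
    · apply Finset.sum_nonneg
      intro t _
      have := GG_nonneg k
      have := GG_nonneg t
      split_ifs <;> simp <;> positivity
  have hin0 : ∀ s, 0 ≤ (∑ k ∈ DqGY M q, if M < k * s then GG k * SGY M q k else 0) := by
    intro s
    apply Finset.sum_nonneg
    intro k _
    have := GG_nonneg k
    have := hS0 k
    split_ifs <;> positivity
  rw [hE, abs_of_nonneg]
  · have e3 : ∑ s ∈ q.divisors, GG s *
        (∑ k ∈ DqGY M q, if M < k * s then GG k * SGY M q k else 0)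
        ≤ C * ((q : ℝ) / q.totient * vGY q) := by
      rw [← sum_div_GG_log q hq, Finset.mul_sum]
      apply Finset.sum_le_sum
      intro s hs
      calc _ ≤ GG s * (C * Real.log s) := mul_le_mul_of_nonneg_left (hin s hs) (GG_nonneg s)
        _ = _ := by ring
    calc _ ≤ (q.totient : ℝ) / q * (C * ((q : ℝ) / q.totient * vGY q)) :=
          mul_le_mul_of_nonneg_left e3 (by positivity)
      _ = C * vGY q := by field_simp
  · apply mul_nonneg (by positivity)
    apply Finset.sum_nonneg
    intro s _
    exact mul_nonneg (GG_nonneg s) (hin0 s)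


theorem prop3_lamR_squared :
    ∀ ε : ℝ, 0 < ε → ∃ C : ℝ, 0 < C ∧ ∀ (N q a : ℕ) (R : ℝ),
      1 ≤ N → 1 ≤ q → Nat.gcd a q = 1 → 2 ≤ R →
      |(∑ n ∈ (Finset.Icc 1 N).filter (fun n : ℕ => (n : ZMod q) = (a : ZMod q)),
          (lamR R n) ^ 2)
        - ((N : ℝ) / (q.totient : ℝ)) * (Real.log R + cGY)|
      ≤ C * (((N : ℝ) / (q.totient : ℝ)) * vGY q
          + ((N : ℝ) / (q.totient : ℝ)) * R ^ (-(1 : ℝ) / 2 + ε) + R ^ 2) := by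
  intro ε hε
  obtain ⟨C1, hC1, h1⟩ := lamR_sq_sum
  obtain ⟨C2, hC2, h2⟩ := GG_asymp (min ε (1 / 4)) (lt_min hε (by norm_num)) (min_le_right _ _)
  obtain ⟨C3, hC3, h3⟩ := E_bound
  refine ⟨C1 + C2 + C3, by positivity, ?_⟩
  intro N q a R hN hq ha hR
  have b1 := h1 N q a R hq ha hR
  have b2 := h2 R (by linarith)
  have hM : 1 ≤ ⌊R⌋₊ := Nat.le_floor (by norm_num; linarith)
  have b3 := h3 ⌊R⌋₊ q hM hq
  have hq0 : (0 : ℝ) < q := by positivity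
  have hφ : (0 : ℝ) < q.totient := by
    have := Nat.totient_pos.mpr hq
    positivity
  have hpow : R ^ (-(1 : ℝ) / 2 + min ε (1 / 4)) ≤ R ^ (-(1 : ℝ) / 2 + ε) :=
    Real.rpow_le_rpow_of_exponent_le (by linarith) (by linarith [min_le_left ε (1 / 4)])
  have hP : 0 < R ^ (-(1 : ℝ) / 2 + ε) := Real.rpow_pos_of_pos (by linarith) _
  have b2' := b2.trans (mul_le_mul_of_nonneg_left hpow hC2.le)
  have hX : 0 ≤ (N : ℝ) / q.totient := by positivity
  have hv : 0 ≤ vGY q := by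
    unfold vGY
    apply Finset.sum_nonneg
    intro p _
    exact div_nonneg (Real.log_natCast_nonneg p) (Nat.cast_nonneg p)
  have hQ : (N : ℝ) / q * QGY ⌊R⌋₊ q
      = (N : ℝ) / q.totient * ((q.totient : ℝ) / q * QGY ⌊R⌋₊ q) := by
    field_simp
  rw [hQ] at b1
  set X := (N : ℝ) / q.totient
  set V := vGY q
  set P := R ^ (-(1 : ℝ) / 2 + ε)
  set W := (q.totient : ℝ) / q * QGY ⌊R⌋₊ q
  set H := ∑ r ∈ Finset.Icc 1 ⌊R⌋₊, GG r
  have hR2 : 0 ≤ R ^ 2 := sq_nonneg R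
  obtain ⟨u1, u2⟩ := abs_le.mp b1
  obtain ⟨v1, v2⟩ := abs_le.mp b2'
  obtain ⟨w1, w2⟩ := abs_le.mp b3
  have hXV : 0 ≤ X * V := mul_nonneg hX hv
  have hXP : 0 ≤ X * P := mul_nonneg hX hP.le
  have m1 := mul_le_mul_of_nonneg_left v1 hX
  have m2 := mul_le_mul_of_nonneg_left v2 hX
  have m3 := mul_le_mul_of_nonneg_left w1 hX
  have m4 := mul_le_mul_of_nonneg_left w2 hX
  have p1 : 0 ≤ (C1 + C2) * (X * V) := by positivity
  have p2 : 0 ≤ (C1 + C3) * (X * P) := by positivity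
  have p3 : 0 ≤ (C2 + C3) * R ^ 2 := by positivity
  rw [abs_le]
  constructor <;> nlinarith
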